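/- Let D ≥ 1, β, x ∈ ℝ^D, y ∈ {0,1}, and δ ≥ 0, and let ℓ(u) = −y·log σ(β·u) − (1−y)·log(1 − σ(β·u)) with σ(t) = 1/(1+e^{−t}). Then the gradient of ℓ at x equals (σ(β·x) − y)·β, and for every coordinate i one has sign((σ(β·x) − y)·β_i) = (1−2y)·sign(β_i). Consequently, the FGSM perturbation λ* = δ·sign(∇_x ℓ(x)) (sign applied componentwise) satisfies ‖λ*‖∞ ≤ δ and maximizes ℓ(x + λ) over all λ ∈ ℝ^D with ‖λ‖∞ ≤ δ. -/

import Mathlib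

/-- The logistic sigmoid `σ(t) = 1/(1+e^{-t})`. -/
noncomputable def sigmoid (t : ℝ) : ℝ := 1 / (1 + Real.exp (-t))

theorem aux_sig_pos (t : ℝ) : 0 < sigmoid t := by
  unfold sigmoid; positivity

theorem aux_sig_lt (t : ℝ) : sigmoid t < 1 := by
  unfold sigmoid
  rw [div_lt_one (by positivity)]
  linarith [Real.exp_pos (-t)]

theorem aux_loss (y : ℝ) (hy : y = 0 ∨ y = 1) (t : ℝ) :
    -y * Real.log (sigmoid t) - (1 - y) * Real.log (1 - sigmoid t)
      = Real.log (1 + Real.exp ((1 - 2 * y) * t)) := by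
  rcases hy with rfl | rfl
  · have h : 1 - sigmoid t = (1 + Real.exp t)⁻¹ := by
      unfold sigmoid
      rw [Real.exp_neg]
      have := Real.exp_pos t
      field_simp
      ring
    rw [h, Real.log_inv]
    norm_num
  · have h : sigmoid t = (1 + Real.exp (-t))⁻¹ := by
      unfold sigmoid
      rw [one_div]
    rw [h, Real.log_inv]
    norm_num

theorem aux_deriv (y : ℝ) (hy : y = 0 ∨ y = 1) (t : ℝ) :
    HasDerivAt (fun t => Real.log (1 + Real.exp ((1 - 2 * y) * t))) (sigmoid t - y) t := by
  have h1 : HasDerivAt (fun t : ℝ => (1 - 2 * y) * t) (1 - 2 * y) t := by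
    simpa using (hasDerivAt_id t).const_mul (1 - 2 * y)
  have h2 := (h1.exp.const_add 1).log (by positivity)
  convert h2 using 1
  have := Real.exp_pos t
  unfold sigmoid
  rcases hy with rfl | rfl
  · rw [Real.exp_neg]
    norm_num
    field_simp
    ring
  · norm_num
    have := Real.exp_pos (-t)
    field_simp
    ring

theorem aux_sign (y : ℝ) (hy : y = 0 ∨ y = 1) (t b : ℝ) :
    Real.sign ((sigmoid t - y) * b) = (1 - 2 * y) * Real.sign b := by
  have h0 := aux_sig_pos t
  have h1 := aux_sig_lt t
  rcases hy with rfl | rfl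
  · rcases lt_trichotomy b 0 with h | h | h
    · rw [Real.sign_of_neg h, Real.sign_of_neg (by nlinarith)]; norm_num
    · simp [h]
    · rw [Real.sign_of_pos h, Real.sign_of_pos (by nlinarith)]; norm_num
  · rcases lt_trichotomy b 0 with h | h | h
    · rw [Real.sign_of_neg h, Real.sign_of_pos (by nlinarith)]; norm_num
    · simp [h]
    · rw [Real.sign_of_pos h, Real.sign_of_neg (by nlinarith)]; norm_num

theorem aux_abs (b : ℝ) : b * Real.sign b = |b| := by
  rcases lt_trichotomy b 0 with h | h | h
  · rw [Real.sign_of_neg h, abs_of_neg h]; ring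
  · simp [h]
  · rw [Real.sign_of_pos h, abs_of_pos h]; ring

/-- FGSM is exact for logistic regression: the gradient of the logistic loss
`ℓ(u) = -y log σ(β·u) - (1-y) log(1-σ(β·u))` at `x` is `(σ(β·x) - y)·β` (stated via the
Fréchet derivative `v ↦ ∑ i, (σ(β·x) - y)β_i v_i`), its componentwise sign equals
`(1-2y) sign(β_i)`, and the FGSM perturbation `λ* = δ · sign(∇ℓ(x))` lies in the ℓ∞ ball of
radius `δ` and maximizes `ℓ(x+λ)` over all `λ` with `‖λ‖∞ ≤ δ`.
Here `Fin D → ℝ` carries the sup (ℓ∞) norm. -/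
theorem fgsm_exact_logreg
    (D : ℕ) (hD : 1 ≤ D) (β x : Fin D → ℝ) (y δ : ℝ) (hy : y = 0 ∨ y = 1) (hδ : 0 ≤ δ)
    (ℓ : (Fin D → ℝ) → ℝ)
    (hℓ : ℓ = fun u => -y * Real.log (sigmoid (∑ i, β i * u i))
        - (1 - y) * Real.log (1 - sigmoid (∑ i, β i * u i)))
    (lstar : Fin D → ℝ)
    (hl : lstar = fun i => δ * Real.sign ((sigmoid (∑ j, β j * x j) - y) * β i)) :
    HasFDerivAt ℓ
      (∑ i, ((sigmoid (∑ j, β j * x j) - y) * β i) •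
        (ContinuousLinearMap.proj i : (Fin D → ℝ) →L[ℝ] ℝ)) x ∧
    (∀ i, Real.sign ((sigmoid (∑ j, β j * x j) - y) * β i) = (1 - 2 * y) * Real.sign (β i)) ∧
    ‖lstar‖ ≤ δ ∧
    ∀ l : Fin D → ℝ, ‖l‖ ≤ δ → ℓ (x + l) ≤ ℓ (x + lstar) := by
  have hs : ∀ i, Real.sign ((sigmoid (∑ j, β j * x j) - y) * β i)
      = (1 - 2 * y) * Real.sign (β i) := fun i => aux_sign y hy _ _
  have hL : ℓ = fun u => Real.log (1 + Real.exp ((1 - 2 * y) * ∑ i, β i * u i)) := by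
    rw [hℓ]; funext u; exact aux_loss y hy _
  have hsq : (1 - 2 * y) * (1 - 2 * y) = 1 := by
    rcases hy with rfl | rfl <;> norm_num
  refine ⟨?_, hs, ?_, ?_⟩
  · have hlin : HasFDerivAt (fun u : Fin D → ℝ => ∑ i, β i * u i)
        (∑ i, β i • (ContinuousLinearMap.proj i : (Fin D → ℝ) →L[ℝ] ℝ)) x := by
      apply HasFDerivAt.fun_sum
      intro i _
      exact (hasFDerivAt_apply i x).const_mul (β i)
    have h := (aux_deriv y hy (∑ j, β j * x j)).comp_hasFDerivAt x hlin
    rw [hL]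
    rw [Finset.smul_sum] at h
    simp only [smul_smul] at h
    exact h
  · rw [pi_norm_le_iff_of_nonneg hδ]
    intro i
    rw [hl, Real.norm_eq_abs, abs_mul, abs_of_nonneg hδ]
    apply mul_le_of_le_one_right hδ
    rcases Real.sign_apply_eq ((sigmoid (∑ j, β j * x j) - y) * β i) with h | h | h <;>
      rw [h] <;> norm_num
  · intro l hlδ
    rw [pi_norm_le_iff_of_nonneg hδ] at hlδ
    rw [hL]
    have key : (1 - 2 * y) * ∑ i, β i * (x + l) i ≤ (1 - 2 * y) * ∑ i, β i * (x + lstar) i := by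
      rw [Finset.mul_sum, Finset.mul_sum]
      apply Finset.sum_le_sum
      intro i _
      have e1 : (1 - 2 * y) * (β i * lstar i) = |β i| * δ := by
        rw [hl]
        simp only [hs]
        rw [← aux_abs]
        linear_combination (β i * δ * Real.sign (β i)) * hsq
      have e2 : (1 - 2 * y) * (β i * l i) ≤ |β i| * δ := by
        have ha : |1 - 2 * y| = 1 := by
          rcases hy with rfl | rfl <;> norm_num
        calc _ ≤ |(1 - 2 * y) * (β i * l i)| := le_abs_self _
          _ = |β i| * |l i| := by rw [abs_mul, abs_mul, ha, one_mul]
          _ ≤ _ := mul_le_mul_of_nonneg_left (hlδ i) (abs_nonneg _)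
      simp only [Pi.add_apply, mul_add]
      linarith
    exact Real.log_le_log (by positivity) (by gcongr)
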